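/- For 0 < |x| < π, one has cos x/sin²x = 1/x² − Σ_{n=1}^∞ (2·(2n−1)·(2^{2n−1} − 1)·|B_{2n}|/(2n)!)·x^{2(n−1)}. -/

import Mathlib

open Real

open Topology

/-!
Expanding each term of the partial fraction series
`1 / z - π cot (π z) = ∑ 2 z / (n ^ 2 - z ^ 2)` geometrically and summing over `n` first gives the
power series of the cotangent, with coefficients `2 ζ(2 m)`, i.e. Bernoulli numbers by Euler's
formula. The identity `1 / sin x = cot (x / 2) - cot x` turns it into the series of the cosecant,
whose derivative is `-cos x / sin x ^ 2`. All of this takes place in the complex disc `‖x‖ < π`,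
where Weierstrass' theorem allows termwise differentiation without bounds on the derivatives.
-/

lemma hasSum_geometric_one_div_sub {K : Type*} [NormedField K] {c w : K} (hcw : ‖w‖ < ‖c‖) :
    HasSum (fun m : ℕ ↦ w ^ m / c ^ (m + 1)) (1 / (c - w)) := by
  have hc : c ≠ 0 := norm_pos_iff.mp ((norm_nonneg w).trans_lt hcw)
  have hr : ‖w / c‖ < 1 := by rwa [norm_div, div_lt_one (norm_pos_iff.mpr hc)]
  convert! (hasSum_geometric_of_norm_lt_one hr).mul_left c⁻¹ using 1
  · ext m
    rw [div_pow, pow_succ]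
    field_simp
  · rw [← mul_inv, mul_sub, mul_one, mul_div_cancel₀ w hc, one_div]

lemma hasSum_deriv_of_eventually_hasSum_mul_pow {ι : Type*} {a : ι → ℂ} {e : ι → ℕ} {f : ℂ → ℂ}
    {z w : ℂ} (hf : ∀ᶠ v in 𝓝 z, HasSum (fun i ↦ a i * v ^ e i) (f v))
    (hw : Summable fun i ↦ a i * w ^ e i) (hzw : ‖z‖ < ‖w‖) :
    HasSum (fun i ↦ a i * (e i * z ^ (e i - 1))) (deriv f z) := by
  have norm_term_le (i : ι) (v : ℂ) (hv : v ∈ Metric.ball 0 ‖w‖) :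
      ‖a i * v ^ e i‖ ≤ ‖a i * w ^ e i‖ := by
    rw [mem_ball_zero_iff] at hv
    rw [norm_mul, norm_mul, norm_pow, norm_pow]
    gcongr
  have h := Complex.hasSum_deriv_of_summable_norm hw.norm (fun i ↦ by fun_prop)
    Metric.isOpen_ball norm_term_le (mem_ball_zero_iff.mpr hzw)
  have h_eq : (fun v ↦ ∑' i, a i * v ^ e i) =ᶠ[𝓝 z] f := hf.mono fun v hv ↦ hv.tsum_eq
  rw [h_eq.deriv_eq] at h
  simpa using h

lemma mem_integerComplement_of_norm_lt_one {z : ℂ} (hz₀ : z ≠ 0) (hz : ‖z‖ < 1) :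
    z ∈ Complex.integerComplement := by
  rw [Complex.mem_integerComplement_iff]
  rintro ⟨n, rfl⟩
  rw [Complex.norm_intCast, ← Int.cast_abs, ← Int.cast_one, Int.cast_lt, Int.abs_lt_one_iff] at hz
  exact hz₀ (by simp [hz])

lemma norm_div_pi_lt_one {x : ℂ} (hx : ‖x‖ < π) : ‖x / π‖ < 1 := by
  rwa [norm_div, Complex.norm_of_nonneg pi_pos.le, div_lt_one pi_pos]

lemma complex_sin_ne_zero_of_norm_lt_pi {x : ℂ} (hx₀ : x ≠ 0) (hx : ‖x‖ < π) :
    Complex.sin x ≠ 0 := by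
  have hπ : (π : ℂ) ≠ 0 := by exact_mod_cast pi_ne_zero
  have h := sin_pi_mul_ne_zero
    (mem_integerComplement_of_norm_lt_one (div_ne_zero hx₀ hπ) (norm_div_pi_lt_one hx))
  rwa [mul_div_cancel₀ x hπ] at h

lemma hasSum_partialFractions_cot {z : ℂ} (hz : z ∈ Complex.integerComplement) :
    HasSum (fun n : ℕ ↦ 2 * z * (1 / ((n + 1 : ℂ) ^ 2 - z ^ 2)))
      (1 / z - π * Complex.cot (π * z)) := by
  have h := (summable_cotTerm hz).hasSum.neg
  rw [show ∑' n, cotTerm z n = _ from (cot_series_rep' hz).symm, neg_sub] at h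
  refine h.congr_fun fun n ↦ ?_
  rw [cotTerm_identity hz, ← mul_neg, ← div_neg]
  ring_nf

lemma hasSum_riemannZeta_nat {k : ℕ} (hk : 1 < k) :
    HasSum (fun n : ℕ ↦ 1 / (n + 1 : ℂ) ^ k) (riemannZeta k) := by
  have h : Summable fun n : ℕ ↦ 1 / (n : ℂ) ^ k := by
    simpa using Complex.summable_ofReal.mpr (summable_one_div_nat_pow.mpr hk)
  rw [zeta_nat_eq_tsum_of_gt_one hk]
  simpa [show k ≠ 0 by omega] using (hasSum_nat_add_iff' 1).mpr h.hasSum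

lemma norm_natCast_add_one_sq (n : ℕ) : ‖(n + 1 : ℂ) ^ 2‖ = (n + 1 : ℝ) ^ 2 := by
  rw [norm_pow, ← Nat.cast_add_one, Complex.norm_natCast, Nat.cast_add_one]

lemma summable_pow_div_nat_sq_pow {w : ℂ} (hw : ‖w‖ < 1) :
    Summable fun p : ℕ × ℕ ↦ w ^ p.2 / ((p.1 + 1 : ℂ) ^ 2) ^ (p.2 + 1) := by
  have h_sq : Summable fun n : ℕ ↦ 1 / (n + 1 : ℝ) ^ 2 := by
    exact_mod_cast (summable_nat_add_iff 1).mpr (summable_one_div_nat_pow.mpr one_lt_two)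
  have h_geom : Summable fun m : ℕ ↦ ‖w‖ ^ m := summable_geometric_of_lt_one (norm_nonneg w) hw
  refine .of_norm_bounded
    (h_sq.mul_of_nonneg h_geom (fun n ↦ by positivity) (fun m ↦ by positivity)) fun ⟨n, m⟩ ↦ ?_
  rw [norm_div, norm_pow, norm_pow, norm_natCast_add_one_sq, one_div_mul_eq_div]
  gcongr
  exact le_self_pow₀ (one_le_pow₀ (by simp)) m.succ_ne_zero

lemma hasSum_riemannZeta_even_mul_pow {w : ℂ} (hw : ‖w‖ < 1) :
    HasSum (fun m : ℕ ↦ riemannZeta (2 * m + 2 : ℕ) * w ^ m)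
      (∑' n : ℕ, 1 / ((n + 1 : ℂ) ^ 2 - w)) := by
  have rows (n : ℕ) : HasSum (fun m : ℕ ↦ w ^ m / ((n + 1 : ℂ) ^ 2) ^ (m + 1))
      (1 / ((n + 1 : ℂ) ^ 2 - w)) := by
    refine hasSum_geometric_one_div_sub (hw.trans_le ?_)
    rw [norm_natCast_add_one_sq]
    exact one_le_pow₀ (by simp)
  have columns (m : ℕ) : HasSum (fun n : ℕ ↦ w ^ m / ((n + 1 : ℂ) ^ 2) ^ (m + 1))
      (riemannZeta (2 * m + 2 : ℕ) * w ^ m) := by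
    simpa only [← pow_mul, mul_add_one, one_div_mul_eq_div] using
      (hasSum_riemannZeta_nat (k := 2 * m + 2) (by omega)).mul_right (w ^ m)
  have h_sum := (summable_pow_div_nat_sq_pow hw).hasSum
  rw [← (h_sum.prod_fiberwise rows).tsum_eq] at h_sum
  exact ((Equiv.prodComm ℕ ℕ).hasSum_iff.mpr h_sum).prod_fiberwise columns

lemma hasSum_one_div_sub_pi_mul_cot {z : ℂ} (hz₀ : z ≠ 0) (hz : ‖z‖ < 1) :
    HasSum (fun m : ℕ ↦ 2 * riemannZeta (2 * m + 2 : ℕ) * z ^ (2 * m + 1))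
      (1 / z - π * Complex.cot (π * z)) := by
  have hz_sq : ‖z ^ 2‖ < 1 := by
    rw [norm_pow]
    exact pow_lt_one₀ (norm_nonneg z) hz two_ne_zero
  have h_frac := hasSum_partialFractions_cot (mem_integerComplement_of_norm_lt_one hz₀ hz)
  rw [← h_frac.tsum_eq, tsum_mul_left]
  refine ((hasSum_riemannZeta_even_mul_pow hz_sq).mul_left (2 * z)).congr_fun fun m ↦ ?_
  ring

lemma riemannZeta_two_mul_add_two (m : ℕ) :
    riemannZeta (2 * m + 2 : ℕ) = 2 ^ (2 * m + 1) * π ^ (2 * m + 2) *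
      (|(bernoulli (2 * m + 2) : ℝ)| : ℝ) / (2 * m + 2).factorial := by
  have h := hasSum_zeta_nat m.succ_ne_zero
  have h_abs := abs_of_nonneg (h.nonneg fun n ↦ by positivity)
  simp only [abs_div, abs_mul, abs_pow, abs_neg, abs_one, one_pow, one_mul, Nat.abs_ofNat,
    Nat.abs_cast, abs_of_pos pi_pos] at h_abs
  rw [← h_abs] at h
  rw [zeta_nat_eq_tsum_of_gt_one (by omega)]
  have h_tsum := congrArg Complex.ofReal h.tsum_eq
  push_cast at h_tsum
  exact h_tsum

lemma hasSum_one_div_sub_cot {x : ℂ} (hx₀ : x ≠ 0) (hx : ‖x‖ < π) :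
    HasSum (fun n : ℕ ↦ 2 ^ (2 * n + 2) * (|(bernoulli (2 * n + 2) : ℝ)| : ℝ) /
      (2 * n + 2).factorial * x ^ (2 * n + 1)) (1 / x - Complex.cot x) := by
  have hπ : (π : ℂ) ≠ 0 := by exact_mod_cast pi_ne_zero
  have h := (hasSum_one_div_sub_pi_mul_cot (div_ne_zero hx₀ hπ) (norm_div_pi_lt_one hx)).mul_left
    (1 / π : ℂ)
  rw [mul_div_cancel₀ x hπ] at h
  convert! h using 1
  · ext n
    rw [riemannZeta_two_mul_add_two, div_pow]
    field_simp
    ring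
  · field_simp

-- At the zeros of `sin x` both sides are `0`, since division by zero gives `0`.
lemma one_div_sin_eq_cot_half_sub_cot (x : ℂ) :
    1 / Complex.sin x = Complex.cot (x / 2) - Complex.cot x := by
  obtain ⟨y, rfl⟩ : ∃ y, x = 2 * y := ⟨x / 2, by ring⟩
  rw [mul_div_cancel_left₀ y two_ne_zero, Complex.cot, Complex.cot, Complex.sin_two_mul,
    Complex.cos_two_mul]
  by_cases hs : Complex.sin y = 0
  · simp [hs]
  by_cases hc : Complex.cos y = 0
  · simp [hc]
  field_simp
  ring

lemma hasSum_one_div_sin_sub {x : ℂ} (hx₀ : x ≠ 0) (hx : ‖x‖ < π) :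
    HasSum (fun n : ℕ ↦ 2 * (2 ^ (2 * n + 1) - 1) * (|(bernoulli (2 * n + 2) : ℝ)| : ℝ) /
      (2 * n + 2).factorial * x ^ (2 * n + 1)) (1 / Complex.sin x - 1 / x) := by
  have hx_half : ‖x / 2‖ < π := by
    rw [norm_div, Complex.norm_ofNat]
    linarith [norm_nonneg x]
  convert! (hasSum_one_div_sub_cot hx₀ hx).sub
    (hasSum_one_div_sub_cot (div_ne_zero hx₀ two_ne_zero) hx_half) using 1
  · ext n
    rw [div_pow]
    field_simp
    ring
  · rw [one_div_sin_eq_cot_half_sub_cot]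
    field_simp
    ring

lemma hasDerivAt_one_div_sin_sub {x : ℂ} (hx : x ≠ 0) (hsin : Complex.sin x ≠ 0) :
    HasDerivAt (fun z ↦ 1 / Complex.sin z - 1 / z)
      (1 / x ^ 2 - Complex.cos x / Complex.sin x ^ 2) x := by
  simp only [one_div]
  convert! ((Complex.hasDerivAt_sin x).fun_inv hsin).sub (hasDerivAt_inv hx) using 1
  ring

theorem cos_div_sin_sq_series_general {x : ℂ} (hx₀ : x ≠ 0) (hx : ‖x‖ < π) :
    HasSum (fun n : ℕ ↦ 2 * (2 * (n + 1) - 1) * (2 ^ (2 * (n + 1) - 1) - 1) *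
        (|(bernoulli (2 * (n + 1)) : ℝ)| : ℝ) / (2 * (n + 1)).factorial * x ^ (2 * ((n + 1) - 1)))
      (1 / x ^ 2 - Complex.cos x / Complex.sin x ^ 2) := by
  obtain ⟨r, hxr, hrπ⟩ := exists_between hx
  have hr₀ : 0 < r := (norm_nonneg x).trans_lt hxr
  have hr : ‖(r : ℂ)‖ = r := Complex.norm_of_nonneg hr₀.le
  have h_near : ∀ᶠ z : ℂ in 𝓝 x, z ≠ 0 ∧ ‖z‖ < π :=
    (eventually_ne_nhds hx₀).and (continuous_norm.continuousAt.eventually_lt_const hx)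
  have h := hasSum_deriv_of_eventually_hasSum_mul_pow
    (h_near.mono fun z hz ↦ hasSum_one_div_sin_sub hz.1 hz.2)
    (hasSum_one_div_sin_sub (Complex.ofReal_ne_zero.mpr hr₀.ne') (hr.trans_lt hrπ)).summable
    (hxr.trans_eq hr.symm)
  have h_sin := complex_sin_ne_zero_of_norm_lt_pi hx₀ hx
  rw [(hasDerivAt_one_div_sin_sub hx₀ h_sin).deriv] at h
  refine h.congr_fun fun n ↦ ?_
  simp only [mul_add_one]
  push_cast
  ring_nf

theorem cos_div_sin_sq_series (x : ℝ) (h1 : 0 < |x|) (h2 : |x| < π) :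
    Real.cos x / Real.sin x ^ 2 =
      1 / x ^ 2 - ∑' n : ℕ,
        2 * (2 * (n + 1) - 1) * (2 ^ (2 * (n + 1) - 1) - 1) *
          |(bernoulli (2 * (n + 1)) : ℝ)| / (Nat.factorial (2 * (n + 1))) *
          x ^ (2 * ((n + 1) - 1)) := by
  have h := (cos_div_sin_sq_series_general (Complex.ofReal_ne_zero.mpr (abs_pos.mp h1))
    ((Complex.norm_real x).trans_lt h2)).tsum_eq
  rw [eq_sub_iff_add_eq', ← eq_sub_iff_add_eq]
  exact_mod_cast h
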